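/- Let S be a set, P a point-separating family of pseudometrics on S, X the uniform space on S induced by P, and Y a uniform space on S coarser than X (the identity map X → Y is uniformly continuous). Assume that for every d ∈ P and z ∈ S the function x ↦ d(x,z) is uniformly continuous on Y. Let μ be a uniform measure on X. Then for every f ∈ U_b(Y) with f ≥ 0: sup{ μ(g) : g ∈ U_b(X), 0 ≤ g ≤ f } = sup{ μ(g) : g ∈ U_b(Y), 0 ≤ g ≤ f }. (Hence the restriction map from uniform measures on X to uniform measures on Y commutes with taking positive parts μ⁺ and negative parts μ⁻.) -/

import Mathlib

/-!
The inequality `≥` holds because `U_b(Y) ⊆ U_b(X)`. For `≤`, take `g ∈ U_b(X)` with `0 ≤ g ≤ f` and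
approximate it from below in two steps.

* Uniform continuity of `g` is witnessed by a finite sum of members of `P`. With `D` a large
  multiple of that sum, the inf-convolution `k x = ⨅ z, g z + D x z` is `1`-Lipschitz for `D`,
  satisfies `0 ≤ k ≤ g` and is uniformly close to `g`, so `μ k` is close to `μ g`.
* Since `k x = sup_z (k z - D x z)⁺`, the function `k` is the pointwise limit of its finite
  lower envelopes `x ↦ max_{z ∈ F} (k z - D x z)⁺`, indexed by the finite sets `F ⊆ S`. These are
  `1`-Lipschitz for `D`, lie between `0` and `k`, and belong to `U_b(Y)` because each `D (·, z)`
  is uniformly continuous on `Y`. Together with `k` they form a UEB set for `X`, so `μ` of the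
  envelopes converges to `μ k`.
-/

open Topology Filter

/-- A pseudometric on a set `S`. -/
def IsPseudometric {S : Type*} (d : S → S → ℝ) : Prop :=
  (∀ x, d x x = 0) ∧ (∀ x y, d x y = d y x) ∧ ∀ x y z, d x z ≤ d x y + d y z

/-- The coarsest uniformity (as a filter on `S × S`) making each pseudometric in `P`
uniformly continuous: it is generated by the entourages `{(x,y) : d(x,y) < ε}`. -/
def pseudometricUniformity {S : Type*} (P : Set (S → S → ℝ)) : Filter (S × S) :=
  ⨅ d ∈ P, ⨅ ε ∈ Set.Ioi (0 : ℝ), Filter.principal {p : S × S | d p.1 p.2 < ε}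

/-- `P` separates the points of `S`. -/
def SeparatesPoints' {S : Type*} (P : Set (S → S → ℝ)) : Prop :=
  ∀ x y : S, x ≠ y → ∃ d ∈ P, 0 < d x y

/-- The bounded uniformly continuous real-valued functions on `S` for the uniformity `u`. -/
def Ub {S : Type*} (u : UniformSpace S) : Set (S → ℝ) :=
  {f | @UniformContinuous S ℝ u _ f ∧ ∃ C : ℝ, ∀ x, |f x| ≤ C}

/-- A set of functions is UEB for `u` if it is uniformly equicontinuous (w.r.t. `u`) and
uniformly bounded. -/
def IsUEB {S : Type*} (u : UniformSpace S) (H : Set (S → ℝ)) : Prop :=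
  (@UniformEquicontinuous (↥H) ℝ S _ u fun f => (f : S → ℝ)) ∧
  ∃ C : ℝ, ∀ f ∈ H, ∀ x, |f x| ≤ C

/-- A uniform measure on `S` with uniformity `u`: a sup-norm-bounded linear functional on
`Ub u` whose restriction to every UEB set is continuous in the topology of pointwise
convergence (the product topology on `S → ℝ`). -/
def IsUniformMeasure {S : Type*} (u : UniformSpace S) (μ : (S → ℝ) → ℝ) : Prop :=
  (∀ f ∈ Ub u, ∀ g ∈ Ub u, μ (f + g) = μ f + μ g) ∧
  (∀ f ∈ Ub u, ∀ c : ℝ, μ (c • f) = c * μ f) ∧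
  (∃ C : ℝ, ∀ f ∈ Ub u, ∀ B : ℝ, (∀ x, |f x| ≤ B) → |μ f| ≤ C * B) ∧
  (∀ H : Set (S → ℝ), H ⊆ Ub u → IsUEB u H → ContinuousOn μ H)

/-! ### Finite sums of pseudometrics and the induced uniformity -/

lemma IsPseudometric.nonneg {S : Type*} {d : S → S → ℝ} (h : IsPseudometric d) (x y : S) :
    0 ≤ d x y := by
  obtain ⟨h1, h2, h3⟩ := h
  have := h3 x y x
  rw [h1, h2 y x] at this
  linarith

lemma isPseudometric_mul_sum {S : Type*} {P : Set (S → S → ℝ)} (hP : ∀ d ∈ P, IsPseudometric d)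
    (t : Finset (S → S → ℝ)) (ht : ∀ d ∈ t, d ∈ P) {K : ℝ} (hK : 0 ≤ K) :
    IsPseudometric (fun x y => K * ∑ d ∈ t, d x y) := by
  refine ⟨fun x => ?_, fun x y => ?_, fun x y z => ?_⟩
  · simp only [Finset.sum_eq_zero fun d hd => (hP d (ht d hd)).1 x, mul_zero]
  · exact congrArg _ (Finset.sum_congr rfl fun d hd => (hP d (ht d hd)).2.1 x y)
  · rw [← mul_add, ← Finset.sum_add_distrib]
    exact mul_le_mul_of_nonneg_left
      (Finset.sum_le_sum fun d hd => (hP d (ht d hd)).2.2 x y z) hK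

/-- Every entourage of the uniformity induced by `P` contains a ball-entourage of a finite sum of
members of `P`. -/
lemma exists_finset_of_mem {S : Type*} {P : Set (S → S → ℝ)} (hP : ∀ d ∈ P, IsPseudometric d)
    {U : Set (S × S)} (hU : U ∈ pseudometricUniformity P) :
    ∃ t : Finset (S → S → ℝ), (∀ d ∈ t, d ∈ P) ∧ ∃ δ > 0, ∀ x y, ∑ d ∈ t, d x y < δ →
      (x, y) ∈ U := by
  classical
  -- The sets with the claimed property form a filter, and it refines the generating principal ones.
  let G : Filter (S × S) :=
    { sets := {U | ∃ t : Finset (S → S → ℝ), (∀ d ∈ t, d ∈ P) ∧ ∃ δ > 0, ∀ x y,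
        ∑ d ∈ t, d x y < δ → (x, y) ∈ U}
      univ_sets := ⟨∅, by simp, 1, one_pos, by simp⟩
      sets_of_superset := by
        rintro U V ⟨t, ht, δ, hδ, h⟩ hUV
        exact ⟨t, ht, δ, hδ, fun x y hxy => hUV (h x y hxy)⟩
      inter_sets := by
        rintro U V ⟨t, ht, δ, hδ, h⟩ ⟨t', ht', δ', hδ', h'⟩
        have hu : ∀ d ∈ t ∪ t', d ∈ P := by
          intro d hd
          rcases Finset.mem_union.1 hd with hd | hd
          exacts [ht d hd, ht' d hd]
        refine ⟨t ∪ t', hu, min δ δ', lt_min hδ hδ', fun x y hxy => ⟨h x y ?_, h' x y ?_⟩⟩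
        · refine lt_of_le_of_lt ?_ (hxy.trans_le (min_le_left _ _))
          exact Finset.sum_le_sum_of_subset_of_nonneg Finset.subset_union_left
            fun d hd _ => (hP d (hu d hd)).nonneg x y
        · refine lt_of_le_of_lt ?_ (hxy.trans_le (min_le_right _ _))
          exact Finset.sum_le_sum_of_subset_of_nonneg Finset.subset_union_right
            fun d hd _ => (hP d (hu d hd)).nonneg x y }
  have hG : G ≤ pseudometricUniformity P := by
    refine le_iInf₂ fun d hd => le_iInf₂ fun ε hε => le_principal_iff.2 ?_
    exact ⟨{d}, by simpa using hd, ε, hε, fun x y hxy => by simpa using hxy⟩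
  exact hG hU

lemma tendsto_mul_sum {S : Type*} {P : Set (S → S → ℝ)} (hP : ∀ d ∈ P, IsPseudometric d)
    (t : Finset (S → S → ℝ)) (ht : ∀ d ∈ t, d ∈ P) (K : ℝ) :
    Tendsto (fun p : S × S => K * ∑ d ∈ t, d p.1 p.2) (pseudometricUniformity P) (𝓝 0) := by
  have h : ∀ d ∈ t, Tendsto (fun p : S × S => d p.1 p.2) (pseudometricUniformity P) (𝓝 0) := by
    intro d hd
    rw [Metric.tendsto_nhds]
    intro ε hε
    have : {p : S × S | d p.1 p.2 < ε} ∈ pseudometricUniformity P :=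
      (iInf₂_le_of_le d (ht d hd) (iInf₂_le ε hε) :
        pseudometricUniformity P ≤ 𝓟 {p : S × S | d p.1 p.2 < ε}) (mem_principal_self _)
    filter_upwards [this] with p hp
    rw [Real.dist_eq, sub_zero, abs_of_nonneg ((hP d (ht d hd)).nonneg _ _)]
    exact hp
  simpa using (tendsto_finsetSum t h).const_mul K

/-! ### Lipschitz functions and their lower envelopes -/

/-- The functions with values in `[0, B]` that are `1`-Lipschitz for `D`. -/
def lipSet {S : Type*} (D : S → S → ℝ) (B : ℝ) : Set (S → ℝ) :=
  {h | (∀ x y, h x ≤ h y + D x y) ∧ ∀ x, 0 ≤ h x ∧ h x ≤ B}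

lemma lipSet_isUEB {S : Type*} (u : UniformSpace S) {D : S → S → ℝ} (hD : IsPseudometric D)
    (hu : Tendsto (fun p : S × S => D p.1 p.2) (@uniformity S u) (𝓝 0)) (B : ℝ) :
    IsUEB u (lipSet D B) := by
  refine ⟨?_, B, fun f hf x => abs_le.2 ⟨by linarith [(hf.2 x).1, (hf.2 x).2], (hf.2 x).2⟩⟩
  intro U hU
  obtain ⟨ε, hε, hεU⟩ := Metric.mem_uniformity_dist.1 hU
  filter_upwards [hu.eventually (gt_mem_nhds hε)] with p hp
  rintro ⟨f, hf⟩
  apply hεU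
  rw [Real.dist_eq, abs_lt]
  have h1 := hf.1 p.1 p.2
  have h2 := hf.1 p.2 p.1
  rw [hD.2.1 p.2 p.1] at h2
  exact ⟨by simp only; linarith, by simp only; linarith⟩

lemma lipSet_subset_Ub {S : Type*} (u : UniformSpace S) {D : S → S → ℝ} (hD : IsPseudometric D)
    (hu : Tendsto (fun p : S × S => D p.1 p.2) (@uniformity S u) (𝓝 0)) (B : ℝ) :
    lipSet D B ⊆ Ub u := fun f hf =>
  ⟨(lipSet_isUEB u hD hu B).1.uniformContinuous ⟨f, hf⟩,
    (lipSet_isUEB u hD hu B).2.imp fun _ hC => hC f hf⟩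

/-- The lower envelope `x ↦ max_{z ∈ F} (k z - D x z)⁺` of `k`; taking the supremum in `ℝ≥0` gives
the value `0` when `F` is empty. -/
noncomputable def envelope {S : Type*} (D : S → S → ℝ) (k : S → ℝ) (F : Finset S) (x : S) : ℝ :=
  ((F.sup fun z => (k z - D x z).toNNReal : NNReal) : ℝ)

lemma envelope_le {S : Type*} {D : S → S → ℝ} {k : S → ℝ} {F : Finset S} {x : S} {a : ℝ}
    (ha : 0 ≤ a) (h : ∀ z ∈ F, k z - D x z ≤ a) : envelope D k F x ≤ a := by
  lift a to NNReal using ha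
  exact NNReal.coe_le_coe.2 (Finset.sup_le fun z hz => Real.toNNReal_le_iff_le_coe.2 (h z hz))

lemma le_envelope {S : Type*} {D : S → S → ℝ} {k : S → ℝ} {F : Finset S} {x z : S}
    (hz : z ∈ F) : k z - D x z ≤ envelope D k F x :=
  (Real.le_coe_toNNReal _).trans <| NNReal.coe_le_coe.2 <|
    Finset.le_sup (f := fun z => (k z - D x z).toNNReal) hz

lemma envelope_nonneg {S : Type*} (D : S → S → ℝ) (k : S → ℝ) (F : Finset S) (x : S) :
    0 ≤ envelope D k F x := NNReal.coe_nonneg _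

lemma envelope_le_self {S : Type*} {D : S → S → ℝ} {k : S → ℝ} {B : ℝ} (hD : IsPseudometric D)
    (hk : k ∈ lipSet D B) (F : Finset S) (x : S) : envelope D k F x ≤ k x := by
  refine envelope_le (hk.2 x).1 fun z _ => ?_
  have := hk.1 z x
  rw [hD.2.1 z x] at this
  linarith

lemma envelope_mem_lipSet {S : Type*} {D : S → S → ℝ} {k : S → ℝ} {B : ℝ} (hD : IsPseudometric D)
    (hk : k ∈ lipSet D B) (F : Finset S) : envelope D k F ∈ lipSet D B := by
  refine ⟨fun x y => ?_, fun x => ⟨envelope_nonneg _ _ _ _,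
    (envelope_le_self hD hk F x).trans (hk.2 x).2⟩⟩
  refine envelope_le (add_nonneg (envelope_nonneg _ _ _ _) (hD.nonneg _ _)) fun z hz => ?_
  have h1 := le_envelope (D := D) (k := k) (x := y) hz
  have h2 := hD.2.2 y x z
  rw [hD.2.1 y x] at h2
  linarith

lemma uniformContinuous_envelope {S : Type*} [UniformSpace S] {D : S → S → ℝ}
    (hD : ∀ z, UniformContinuous fun x => D x z) (k : S → ℝ) (F : Finset S) :
    UniformContinuous (envelope D k F) := by
  classical
  induction F using Finset.induction_on with
  | empty =>
    have : envelope D k ∅ = fun _ => 0 := by ext x; simp [envelope]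
    rw [this]
    exact uniformContinuous_const
  | insert a F _ ih =>
    have : envelope D k (insert a F) = fun x => max (max (k a - D x a) 0) (envelope D k F x) := by
      ext x
      simp [envelope, Finset.sup_insert]
    rw [this]
    have hmax : UniformContinuous fun p : ℝ × ℝ => max p.1 p.2 :=
      lipschitzWith_max.uniformContinuous
    exact hmax.comp
      ((hmax.comp ((uniformContinuous_const.sub (hD a)).prodMk uniformContinuous_const)).prodMk ih)

/-- The envelopes converge pointwise: they agree with `k` at `x` as soon as `x ∈ F`. -/
lemma tendsto_envelope {S : Type*} {D : S → S → ℝ} {k : S → ℝ} {B : ℝ} (hD : IsPseudometric D)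
    (hk : k ∈ lipSet D B) : Tendsto (envelope D k) atTop (𝓝 k) := by
  rw [tendsto_pi_nhds]
  intro x
  refine tendsto_const_nhds.congr' ?_
  filter_upwards [eventually_ge_atTop {x}] with F hF
  refine le_antisymm ?_ (envelope_le_self hD hk F x)
  have := le_envelope (D := D) (k := k) (x := x) (Finset.singleton_subset_iff.1 hF)
  rwa [hD.1, sub_zero] at this

/-! ### Approximation from below by Lipschitz functions -/

/-- Inf-convolution with `D` gives a `1`-Lipschitz function for `D` lying within `ε` below `g`,
provided `D` exceeds the oscillation of `g` wherever `g` varies by more than `ε`. -/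
lemma exists_lip_approx {S : Type*} {D : S → S → ℝ} (hD : IsPseudometric D) {g : S → ℝ} {B ε : ℝ}
    (hg : ∀ x, 0 ≤ g x ∧ g x ≤ B) (hε : ∀ x z, g x - ε ≤ g z + D x z) :
    ∃ k ∈ lipSet D B, ∀ x, k x ≤ g x ∧ g x - ε ≤ k x := by
  have hb : ∀ x, BddBelow (Set.range fun z => g z + D x z) := by
    intro x
    refine ⟨0, ?_⟩
    rintro _ ⟨z, rfl⟩
    exact add_nonneg (hg z).1 (hD.nonneg x z)
  have hle : ∀ x, ⨅ z, g z + D x z ≤ g x := fun x => by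
    simpa [hD.1] using ciInf_le (hb x) x
  refine ⟨fun x => ⨅ z, g z + D x z, ⟨fun x y => ?_, fun x => ⟨?_, (hle x).trans (hg x).2⟩⟩,
    fun x => ⟨hle x, ?_⟩⟩
  · have : Nonempty S := ⟨x⟩
    rw [← sub_le_iff_le_add]
    refine le_ciInf fun z => ?_
    have h1 := ciInf_le (hb x) z
    have h2 := hD.2.2 x y z
    simp only at h1 ⊢
    linarith
  · exact Real.iInf_nonneg fun z => add_nonneg (hg z).1 (hD.nonneg x z)
  · have : Nonempty S := ⟨x⟩
    exact le_ciInf fun z => hε x z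

/-- A pseudometric `D`, uniformly continuous on `X` and with each `D (·, z)` uniformly continuous on
`Y`, that dominates the variation of `g` up to `ε`. -/
lemma exists_pseudometric {S : Type*} {P : Set (S → S → ℝ)} (hP : ∀ d ∈ P, IsPseudometric d)
    (uX uY : UniformSpace S) (hX : @uniformity S uX = pseudometricUniformity P)
    (hfun : ∀ d ∈ P, ∀ z : S, @UniformContinuous S ℝ uY _ fun x => d x z)
    {g : S → ℝ} (hgu : @UniformContinuous S ℝ uX _ g) {B ε : ℝ}
    (hg : ∀ x, 0 ≤ g x ∧ g x ≤ B) (hε : 0 < ε) :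
    ∃ D : S → S → ℝ, IsPseudometric D ∧
      Tendsto (fun p : S × S => D p.1 p.2) (@uniformity S uX) (𝓝 0) ∧
      (∀ z, @UniformContinuous S ℝ uY _ fun x => D x z) ∧
      ∀ x z, g x - ε ≤ g z + D x z := by
  have hU : {p : S × S | dist (g p.1) (g p.2) < ε} ∈ pseudometricUniformity P := by
    rw [← hX]
    exact hgu (Metric.dist_mem_uniformity hε)
  obtain ⟨t, ht, δ, hδ, h⟩ := exists_finset_of_mem hP hU
  -- The factor `|B| / δ` makes `D x z ≥ B ≥ g x` as soon as the sum is at least `δ`.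
  have hK : 0 ≤ |B| / δ := by positivity
  have hD := isPseudometric_mul_sum hP t ht hK
  refine ⟨_, hD, ?_, fun z => ?_, fun x z => ?_⟩
  · rw [hX]
    exact tendsto_mul_sum hP t ht _
  · classical
    have hs : ∀ s ⊆ t, UniformContinuous fun x => ∑ d ∈ s, d x z := by
      intro s
      induction s using Finset.induction_on with
      | empty => simpa using (uniformContinuous_const : UniformContinuous fun _ : S => (0 : ℝ))
      | insert a s ha ih =>
        intro hst
        simp only [Finset.sum_insert ha]
        exact (hfun a (ht a (hst (Finset.mem_insert_self a s))) z).add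
          (ih ((Finset.subset_insert a s).trans hst))
    exact (uniformContinuous_const_smul (|B| / δ)).comp (hs t subset_rfl)
  · rcases lt_or_ge (∑ d ∈ t, d x z) δ with hlt | hge
    · have h1 : |g x - g z| < ε := h x z hlt
      have h2 := hD.nonneg x z
      have h3 := (abs_lt.1 h1).2
      linarith
    · have h1 : |B| / δ * δ ≤ |B| / δ * ∑ d ∈ t, d x z := mul_le_mul_of_nonneg_left hge hK
      rw [div_mul_cancel₀ _ hδ.ne'] at h1
      linarith [le_abs_self B, (hg x).2, (hg z).1]

/-- Compatibility with positive parts: under the standing assumptions, for `f ∈ U_b(Y)` with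
`f ≥ 0`, the supremum of `μ(g)` over `g ∈ U_b(X)` with `0 ≤ g ≤ f` equals the supremum over
`g ∈ U_b(Y)` with `0 ≤ g ≤ f`. -/
theorem uniform_measure_positive_part_commutes
    {S : Type*} (P : Set (S → S → ℝ)) (hP : ∀ d ∈ P, IsPseudometric d)
    (hsep : SeparatesPoints' P)
    (uX uY : UniformSpace S)
    (hX : @uniformity S uX = pseudometricUniformity P)
    (hcoarse : @UniformContinuous S S uX uY id)
    (hfun : ∀ d ∈ P, ∀ z : S, @UniformContinuous S ℝ uY _ fun x => d x z)
    (μ : (S → ℝ) → ℝ) (hμ : IsUniformMeasure uX μ)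
    (f : S → ℝ) (hf : f ∈ Ub uY) (hf0 : ∀ x, 0 ≤ f x) :
    sSup {r : ℝ | ∃ g ∈ Ub uX, (∀ x, 0 ≤ g x ∧ g x ≤ f x) ∧ r = μ g} =
      sSup {r : ℝ | ∃ g ∈ Ub uY, (∀ x, 0 ≤ g x ∧ g x ≤ f x) ∧ r = μ g} := by
  have hsub : Ub uY ⊆ Ub uX := fun g hg =>
    ⟨@UniformContinuous.comp S S ℝ uX uY _ g id hg.1 hcoarse, hg.2⟩
  obtain ⟨B, hB⟩ := hf.2
  have hfB : ∀ x, f x ≤ B := fun x => (le_abs_self _).trans (hB x)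
  obtain ⟨hadd, -, ⟨C, hC⟩, hcont⟩ := hμ
  have hbdd : BddAbove {r : ℝ | ∃ g ∈ Ub uX, (∀ x, 0 ≤ g x ∧ g x ≤ f x) ∧ r = μ g} := by
    refine ⟨C * B, ?_⟩
    rintro _ ⟨g, hg, hgf, rfl⟩
    refine (le_abs_self _).trans (hC g hg B fun x => ?_)
    rw [abs_of_nonneg (hgf x).1]
    exact (hgf x).2.trans (hfB x)
  have hmono : {r : ℝ | ∃ g ∈ Ub uY, (∀ x, 0 ≤ g x ∧ g x ≤ f x) ∧ r = μ g} ⊆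
      {r : ℝ | ∃ g ∈ Ub uX, (∀ x, 0 ≤ g x ∧ g x ≤ f x) ∧ r = μ g} := by
    rintro _ ⟨g, hg, h⟩
    exact ⟨g, hsub hg, h⟩
  have h0 : @UniformContinuous S ℝ uY _ (0 : S → ℝ) := uniformContinuous_const
  have hneY : {r : ℝ | ∃ g ∈ Ub uY, (∀ x, 0 ≤ g x ∧ g x ≤ f x) ∧ r = μ g}.Nonempty :=
    ⟨μ 0, 0, ⟨h0, 0, by simp⟩, fun x => ⟨le_rfl, hf0 x⟩, rfl⟩
  refine le_antisymm (csSup_le (hneY.mono hmono) ?_) (csSup_le_csSup hbdd hneY hmono)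
  rintro _ ⟨g, hg, hgf, rfl⟩
  refine le_of_forall_pos_le_add fun η hη => ?_
  -- Half of `η` is spent on replacing `g` by `k`, half on replacing `k` by an envelope.
  set ε : ℝ := η / (2 * (|C| + 1)) with hεdef
  have hC1 : 0 < |C| + 1 := by positivity
  have hε : 0 < ε := by positivity
  have hgB : ∀ x, 0 ≤ g x ∧ g x ≤ B := fun x => ⟨(hgf x).1, (hgf x).2.trans (hfB x)⟩
  obtain ⟨D, hD, hDX, hDY, hDg⟩ := exists_pseudometric hP uX uY hX hfun hg.1 hgB hε
  obtain ⟨k, hk, hkg⟩ := exists_lip_approx hD hgB hDg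
  have hkU := lipSet_subset_Ub uX hD hDX B hk
  have hgk : μ g ≤ μ k + η / 2 := by
    have hdiff : g - k ∈ Ub uX := by
      refine ⟨@UniformContinuous.sub ℝ S _ _ _ uX g k hg.1 hkU.1, ε, fun x => ?_⟩
      exact abs_le.2 ⟨by simp only [Pi.sub_apply]; linarith [(hkg x).1],
        by simp only [Pi.sub_apply]; linarith [(hkg x).2]⟩
    have h1 := hadd _ hdiff _ hkU
    rw [sub_add_cancel] at h1
    have h2 := hC _ hdiff ε fun x => abs_le.2 ⟨by simp only [Pi.sub_apply]; linarith [(hkg x).1],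
      by simp only [Pi.sub_apply]; linarith [(hkg x).2]⟩
    have h3 : C * ε ≤ (|C| + 1) * ε :=
      mul_le_mul_of_nonneg_right (by linarith [le_abs_self C]) hε.le
    have h4 : (|C| + 1) * ε = η / 2 := by rw [hεdef]; field_simp
    linarith [le_abs_self (μ (g - k))]
  have hlim : Tendsto (fun F => μ (envelope D k F)) atTop (𝓝 (μ k)) :=
    (hcont _ (lipSet_subset_Ub uX hD hDX B) (lipSet_isUEB uX hD hDX B) k hk).tendsto.comp
      (tendsto_nhdsWithin_iff.2 ⟨tendsto_envelope hD hk,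
        Eventually.of_forall fun F => envelope_mem_lipSet hD hk F⟩)
  obtain ⟨F, hF⟩ := (hlim.eventually (lt_mem_nhds (sub_lt_self (μ k) (half_pos hη)))).exists
  have hmem : μ (envelope D k F) ≤
      sSup {r : ℝ | ∃ g ∈ Ub uY, (∀ x, 0 ≤ g x ∧ g x ≤ f x) ∧ r = μ g} := by
    refine le_csSup (hbdd.mono hmono) ⟨_, ⟨@uniformContinuous_envelope S uY D hDY k F, ?_⟩,
      fun x => ⟨envelope_nonneg _ _ _ _,
        (envelope_le_self hD hk F x).trans ((hkg x).1.trans (hgf x).2)⟩, rfl⟩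
    exact (lipSet_isUEB uX hD hDX B).2.imp fun _ h => h _ (envelope_mem_lipSet hD hk F)
  linarith
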